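/- Let V ⊆ Π be a linear subspace with Σ ⊆ V, Q(V^r) ⊆ V^m and P(V^m) ⊆ V^n. If H(V) is finite dimensional, then H(Σ) is finite dimensional and dim H(V) ≥ ∑_{i∈ι} dim(ker P̂ i / ran Q̂ i). -/

import Mathlib

noncomputable section

open Submodule

variable {ι : Type*}

/-- The submodule of finitely supported families in a product of `ℂ`-modules. -/
def finSupp (F : ι → Type*) [∀ i, AddCommGroup (F i)] [∀ i, Module ℂ (F i)] :
    Submodule ℂ (∀ i, F i) where
  carrier := {a | {i | a i ≠ 0}.Finite}
  zero_mem' := by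
    simp
  add_mem' := by
    intro a b ha hb
    refine (ha.union hb).subset fun i hi => ?_
    simp only [Set.mem_setOf_eq, Set.mem_union] at hi ⊢
    by_contra h
    push_neg at h
    exact hi (by simp [h.1, h.2])
  smul_mem' := by
    intro c a ha
    refine ha.subset fun i hi => ?_
    simp only [Set.mem_setOf_eq] at hi ⊢
    intro h
    exact hi (by simp [h])

/-- The componentwise linear map induced by a family of linear maps. -/
def pwMap {F G : ι → Type*} [∀ i, AddCommGroup (F i)] [∀ i, Module ℂ (F i)]
    [∀ i, AddCommGroup (G i)] [∀ i, Module ℂ (G i)]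
    (T : ∀ i, F i →ₗ[ℂ] G i) : (∀ i, F i) →ₗ[ℂ] (∀ i, G i) where
  toFun u i := T i (u i)
  map_add' u v := by funext i; simp
  map_smul' c u := by funext i; simp

@[simp] theorem pwMap_apply {F G : ι → Type*} [∀ i, AddCommGroup (F i)] [∀ i, Module ℂ (F i)]
    [∀ i, AddCommGroup (G i)] [∀ i, Module ℂ (G i)]
    (T : ∀ i, F i →ₗ[ℂ] G i) (u : ∀ i, F i) (i : ι) : pwMap T u i = T i (u i) := rfl

/-- The `k`-th power `V^k` of a subspace `V ⊆ Π`, inside `∏ i, (E i)^k`. -/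
def Vpow {E : ι → Type*} [∀ i, AddCommGroup (E i)] [∀ i, Module ℂ (E i)]
    (V : Submodule ℂ (∀ i, E i)) (k : ℕ) : Submodule ℂ (∀ i, Fin k → E i) where
  carrier := {u | ∀ j : Fin k, (fun i => u i j) ∈ V}
  zero_mem' := fun _ => V.zero_mem
  add_mem' := fun ha hb j => V.add_mem (ha j) (hb j)
  smul_mem' := fun c _a ha j => V.smul_mem c (ha j)

theorem Vpow_mono {E : ι → Type*} [∀ i, AddCommGroup (E i)] [∀ i, Module ℂ (E i)]
    {V W : Submodule ℂ (∀ i, E i)} (h : V ≤ W) (k : ℕ) : Vpow V k ≤ Vpow W k :=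
  fun _ hu j => h (hu j)

section Coh

variable {E : ι → Type*} [∀ i, AddCommGroup (E i)] [∀ i, Module ℂ (E i)] {r m n : ℕ}

/-- The local cohomology space `ker P̂ i / ran Q̂ i`. -/
abbrev locCoh (Qh : ∀ i, (Fin r → E i) →ₗ[ℂ] (Fin m → E i))
    (Ph : ∀ i, (Fin m → E i) →ₗ[ℂ] (Fin n → E i)) (i : ι) : Type _ :=
  ↥(LinearMap.ker (Ph i)) ⧸
    ((LinearMap.range (Qh i)).comap (LinearMap.ker (Ph i)).subtype)

/-- `ker (P : V^m → V^n)` as a submodule of `Π^m`. -/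
abbrev cohKer (Ph : ∀ i, (Fin m → E i) →ₗ[ℂ] (Fin n → E i))
    (V : Submodule ℂ (∀ i, E i)) : Submodule ℂ (∀ i, Fin m → E i) :=
  Vpow V m ⊓ LinearMap.ker (pwMap Ph)

/-- `ran (Q : V^r → V^m)` as a submodule of `Π^m`. -/
abbrev cohRan (Qh : ∀ i, (Fin r → E i) →ₗ[ℂ] (Fin m → E i))
    (V : Submodule ℂ (∀ i, E i)) : Submodule ℂ (∀ i, Fin m → E i) :=
  (Vpow V r).map (pwMap Qh)

/-- The cohomology `H(V) = ker (P : V^m → V^n) / ran (Q : V^r → V^m)`. -/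
abbrev coh (Qh : ∀ i, (Fin r → E i) →ₗ[ℂ] (Fin m → E i))
    (Ph : ∀ i, (Fin m → E i) →ₗ[ℂ] (Fin n → E i))
    (V : Submodule ℂ (∀ i, E i)) : Type _ :=
  ↥(cohKer Ph V) ⧸ ((cohRan Qh V).comap (cohKer Ph V).subtype)

theorem kerMem (Ph : ∀ i, (Fin m → E i) →ₗ[ℂ] (Fin n → E i))
    {V : Submodule ℂ (∀ i, E i)} (a : ↥(cohKer Ph V)) (i : ι) :
    (a : ∀ j, Fin m → E j) i ∈ LinearMap.ker (Ph i) := by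
  have h : pwMap Ph (a : ∀ j, Fin m → E j) = 0 :=
    LinearMap.mem_ker.mp (Submodule.mem_inf.mp a.2).2
  exact LinearMap.mem_ker.mpr (by simpa using congrFun h i)

/-- The map `H(V) → H(W)` induced by an inclusion `V ⊆ W`. -/
def cohMap (Qh : ∀ i, (Fin r → E i) →ₗ[ℂ] (Fin m → E i))
    (Ph : ∀ i, (Fin m → E i) →ₗ[ℂ] (Fin n → E i))
    {V W : Submodule ℂ (∀ i, E i)} (h : V ≤ W) :
    coh Qh Ph V →ₗ[ℂ] coh Qh Ph W :=
  Submodule.mapQ _ _ (Submodule.inclusion (inf_le_inf_right _ (Vpow_mono h m)))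
    (by
      intro x hx
      simp only [Submodule.mem_comap] at hx ⊢
      exact Submodule.map_mono (Vpow_mono h r) hx)

end Coh

theorem coh_map_injective {E : ι → Type*} [∀ i, AddCommGroup (E i)] [∀ i, Module ℂ (E i)]
    {r m n : ℕ} (Qh : ∀ i, (Fin r → E i) →ₗ[ℂ] (Fin m → E i))
    (Ph : ∀ i, (Fin m → E i) →ₗ[ℂ] (Fin n → E i))
    (V : Submodule ℂ (∀ i, E i)) (hV : finSupp E ≤ V) :
    Function.Injective (cohMap Qh Ph hV) := by
  classical
  rw [injective_iff_map_eq_zero]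
  intro x hx
  obtain ⟨a, rfl⟩ := Submodule.Quotient.mk_surjective _ x
  rw [cohMap, Submodule.mapQ_apply, Submodule.Quotient.mk_eq_zero] at hx
  rw [Submodule.Quotient.mk_eq_zero]
  obtain ⟨v, -, hva⟩ := hx
  have hva' : ∀ i, Qh i (v i) = (a : ∀ j, Fin m → E j) i := fun i => congrFun hva i
  have ha : ∀ j : Fin m, {i | (a : ∀ j, Fin m → E j) i j ≠ 0}.Finite :=
    fun j => (Submodule.mem_inf.mp a.2).1 j
  refine ⟨fun i => if (a : ∀ j, Fin m → E j) i = 0 then 0 else v i, ?_, ?_⟩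
  · intro j
    refine (Set.finite_iUnion ha).subset fun i hi => ?_
    simp only [Set.mem_setOf_eq, Set.mem_iUnion] at hi ⊢
    by_contra! h
    have h0 : (a : ∀ j, Fin m → E j) i = 0 := funext h
    exact hi (by rw [if_pos h0]; rfl)
  · funext i
    rw [pwMap_apply]
    split_ifs with h
    · rw [map_zero]; exact h.symm
    · exact hva' i

/-- Restriction of cohomology to finitely many local cohomologies. -/
def cohRes {E : ι → Type*} [∀ i, AddCommGroup (E i)] [∀ i, Module ℂ (E i)]
    {r m n : ℕ} (Qh : ∀ i, (Fin r → E i) →ₗ[ℂ] (Fin m → E i))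
    (Ph : ∀ i, (Fin m → E i) →ₗ[ℂ] (Fin n → E i))
    (V : Submodule ℂ (∀ i, E i)) (S : Finset ι) :
    coh Qh Ph V →ₗ[ℂ] (∀ i : S, locCoh Qh Ph i) :=
  LinearMap.pi fun i => Submodule.mapQ _ _
    (LinearMap.codRestrict (LinearMap.ker (Ph i))
      ((LinearMap.proj (i : ι)).comp (cohKer Ph V).subtype) (fun a => kerMem Ph a i))
    (by
      rintro a ⟨v, -, hv⟩
      exact ⟨v i, congrFun hv i⟩)

theorem cohRes_surjective {E : ι → Type*} [∀ i, AddCommGroup (E i)] [∀ i, Module ℂ (E i)]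
    {r m n : ℕ} (Qh : ∀ i, (Fin r → E i) →ₗ[ℂ] (Fin m → E i))
    (Ph : ∀ i, (Fin m → E i) →ₗ[ℂ] (Fin n → E i))
    (V : Submodule ℂ (∀ i, E i)) (hV : finSupp E ≤ V) (S : Finset ι) :
    Function.Surjective (cohRes Qh Ph V S) := by
  classical
  intro y
  choose b hb using fun i => Submodule.Quotient.mk_surjective _ (y i)
  let a : ∀ i, Fin m → E i := fun i => if h : i ∈ S then (b ⟨i, h⟩ : Fin m → E i) else 0
  have ha : a ∈ cohKer Ph V := by
    refine ⟨fun j => hV (S.finite_toSet.subset fun i hi => ?_), ?_⟩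
    · by_contra h
      have h' : i ∉ S := h
      exact hi (by simp only [a]; rw [dif_neg h']; rfl)
    · refine LinearMap.mem_ker.mpr ?_
      funext i
      rw [pwMap_apply]
      simp only [a]
      split_ifs with h
      · exact (b ⟨i, h⟩).2
      · exact map_zero _
  refine ⟨Submodule.Quotient.mk ⟨a, ha⟩, ?_⟩
  funext i
  rw [← hb i, cohRes, LinearMap.pi_apply, Submodule.mapQ_apply]
  congr 1
  apply Subtype.ext
  change a i = _
  simp [a]

theorem statement_4 {ι : Type*} [Countable ι] (E : ι → Type*)
    [∀ i, NormedAddCommGroup (E i)] [∀ i, InnerProductSpace ℂ (E i)]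
    [∀ i, FiniteDimensional ℂ (E i)] (r m n : ℕ)
    (Qh : ∀ i, (Fin r → E i) →ₗ[ℂ] (Fin m → E i))
    (Ph : ∀ i, (Fin m → E i) →ₗ[ℂ] (Fin n → E i))
    (hPQ : ∀ i, (Ph i).comp (Qh i) = 0)
    (V : Submodule ℂ (∀ i, E i)) (hSigmaV : finSupp E ≤ V)
    (hQ : (Vpow V r).map (pwMap Qh) ≤ Vpow V m)
    (hP : (Vpow V m).map (pwMap Ph) ≤ Vpow V n)
    (hfin : FiniteDimensional ℂ (coh Qh Ph V)) :
    FiniteDimensional ℂ (coh Qh Ph (finSupp E)) ∧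
      ∑ᶠ i, Module.finrank ℂ (locCoh Qh Ph i) ≤ Module.finrank ℂ (coh Qh Ph V) := by
  refine ⟨FiniteDimensional.of_injective _ (coh_map_injective Qh Ph V hSigmaV), ?_⟩
  by_cases hs : (Function.support fun i => Module.finrank ℂ (locCoh Qh Ph i)).Finite
  · have hfree : ∀ i : hs.toFinset, Module.Free ℂ (locCoh Qh Ph i) :=
      fun i => Module.Free.of_divisionRing ℂ _
    have hff : ∀ i : hs.toFinset, Module.Finite ℂ (locCoh Qh Ph i) :=
      fun i => inferInstance
    rw [finsum_eq_sum _ hs, ← Finset.sum_coe_sort, ← Module.finrank_pi_fintype ℂ]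
    exact LinearMap.finrank_le_finrank_of_surjective
      (cohRes_surjective Qh Ph V hSigmaV hs.toFinset)
  · rw [finsum_of_infinite_support hs]
    exact Nat.zero_le _
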